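/- For every even integer n ≥ 6 there exists a set S of n points in the Euclidean plane in general position, partitioned into a set R of n/2 red points and a set B of n/2 blue points, such that for every red point u ∈ R and every blue point v ∈ B there is a closed disk containing both u and v that contains at most ⌈n/5⌉ + 1 points of S. -/

import Mathlib

/-!
Place five small clusters of points at the centre `(0,0)` and at the four rim positions
`(1,0)`, `(-1,0)`, `(0,1)`, `(0,-1)`.  The east and west clusters are blue, the north and south
clusters are red, the central one takes the remaining points of both colours, and every cluster
has at most `s = ⌈n/5⌉` points.  Red-blue pairs then occur only inside the central cluster or
along the edges of the wheel with hub at the centre, which is the Delaunay graph of the five positions.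

Each cluster lies on a short line segment: the east, west, north and south clusters on horizontal
ones, the central cluster on a vertical one.  For a red-blue pair in two different clusters, one of
its points, `u`, lies on a segment such that a disk tangent to it at `u` (very slightly enlarged)
contains the other point `v` and, apart from `u`, only points of the cluster of `v`; it therefore
contains at most `1 + s` points (`exists_disk`).  For a red-blue pair inside the central cluster, a
disk around the origin meets only that cluster.

All the inequalities are strict, so they survive a small perturbation, and arbitrarily small
perturbations achieve general position (`exists_genPos_near`): moving one point at a
time, one only has to avoid a null set made of finitely many points, lines and circles.
-/

open EuclideanGeometry Metric

noncomputable section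

/-- Points of the Euclidean plane. -/
abbrev Pt := EuclideanSpace ℝ (Fin 2)

/-- A set of points in the plane is in general position if no three of its points are
collinear and no four of its points are concyclic. -/
def GenPos (S : Set Pt) : Prop :=
  (∀ T ⊆ S, T.ncard = 3 → ¬Collinear ℝ T) ∧
  (∀ T ⊆ S, T.ncard = 4 → ¬Cospherical T)

open MeasureTheory Filter Topology

/-! ### Perturbation to general position -/

/-- Two circles of the plane with three common points coincide, so the fourth points concyclic with
three given ones lie on a single circle. -/
lemma volume_cospherical_eq_zero {a b c : Pt} (hab : a ≠ b) (hac : a ≠ c) (hbc : b ≠ c) :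
    volume {x : Pt | Cospherical ({x, a, b, c} : Set Pt)} = 0 := by
  rcases Set.eq_empty_or_nonempty {x : Pt | Cospherical ({x, a, b, c} : Set Pt)} with h | ⟨y, o, r, ho⟩
  · rw [h]; simp
  · refine measure_mono_null ?_ (Measure.addHaar_sphere volume o r)
    rintro x ⟨o', r', ho'⟩
    have key : (⟨o', r'⟩ : EuclideanGeometry.Sphere Pt) = ⟨o, r⟩ := by
      by_contra hne
      have := EuclideanGeometry.eq_of_mem_sphere_of_mem_sphere_of_finrank_eq_two
        (V := EuclideanSpace ℝ (Fin 2)) (by simp) hne hab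
        (p := c) (EuclideanGeometry.mem_sphere.2 (ho' a (by simp)))
        (EuclideanGeometry.mem_sphere.2 (ho' b (by simp)))
        (EuclideanGeometry.mem_sphere.2 (ho' c (by simp)))
        (EuclideanGeometry.mem_sphere.2 (ho a (by simp)))
        (EuclideanGeometry.mem_sphere.2 (ho b (by simp)))
        (EuclideanGeometry.mem_sphere.2 (ho c (by simp)))
      rcases this with h | h
      · exact hac h.symm
      · exact hbc h.symm
    have h1 : o' = o := congrArg EuclideanGeometry.Sphere.center key
    have h2 : r' = r := congrArg EuclideanGeometry.Sphere.radius key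
    have := ho' x (by simp)
    rw [h1, h2] at this
    rwa [mem_sphere_iff_norm, ← dist_eq_norm]

lemma volume_line_eq_zero (a b : Pt) : volume (line[ℝ, a, b] : Set Pt) = 0 := by
  apply Measure.addHaar_affineSubspace
  intro h
  have h1 : Module.finrank ℝ (line[ℝ, a, b]).direction ≤ 1 := by
    rw [direction_affineSpan]
    exact (collinear_iff_finrank_le_one).1 (collinear_pair ℝ a b)
  rw [h, AffineSubspace.direction_top, finrank_top, finrank_euclideanSpace_fin] at h1
  omega

/-- The positions of a new point that could destroy the general position of `S`: the points of `S`,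
the lines through two of them and the circles through three of them. -/
def badSet (S : Set Pt) : Set Pt :=
  S ∪ (⋃ a ∈ S, ⋃ b ∈ S, (line[ℝ, a, b] : Set Pt)) ∪
    ⋃ a ∈ S, ⋃ b ∈ S, ⋃ c ∈ S, {x | a ≠ b ∧ a ≠ c ∧ b ≠ c ∧ Cospherical ({x, a, b, c} : Set Pt)}

lemma volume_badSet {S : Set Pt} (hS : S.Finite) : volume (badSet S) = 0 := by
  have hc := hS.countable
  refine measure_union_null (measure_union_null (hS.measure_zero _) ?_) ?_
  · refine (measure_biUnion_null_iff hc).2 fun a _ => (measure_biUnion_null_iff hc).2 fun b _ => ?_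
    exact volume_line_eq_zero a b
  · refine (measure_biUnion_null_iff hc).2 fun a _ => (measure_biUnion_null_iff hc).2 fun b _ =>
      (measure_biUnion_null_iff hc).2 fun c _ => ?_
    by_cases h : a ≠ b ∧ a ≠ c ∧ b ≠ c
    · exact measure_mono_null (fun x hx => hx.2.2.2)
        (volume_cospherical_eq_zero h.1 h.2.1 h.2.2)
    · have : {x | a ≠ b ∧ a ≠ c ∧ b ≠ c ∧ Cospherical ({x, a, b, c} : Set Pt)} = ∅ := by
        ext x
        simp only [Set.mem_ofPred_eq, Set.mem_empty_iff_false, iff_false]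
        tauto
      rw [this]; simp

lemma genPos_insert {S : Set Pt} (h : GenPos S) {x : Pt} (hx : x ∉ badSet S) :
    GenPos (insert x S) := by
  simp only [badSet, Set.mem_union, Set.mem_iUnion, not_or, not_exists, Set.mem_ofPred_eq] at hx
  obtain ⟨⟨-, hl⟩, hc⟩ := hx
  have hsub : ∀ T ⊆ insert x S, T \ {x} ⊆ S := fun T hT => by
    rw [Set.sdiff_subset_iff]; simpa using hT
  constructor
  · intro T hT hcard hcol
    by_cases hxT : x ∈ T
    · have h2 : (T \ {x}).ncard = 2 := by rw [Set.ncard_sdiff_singleton_of_mem hxT, hcard]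
      obtain ⟨a, b, hab, hTab⟩ := Set.ncard_eq_two.1 h2
      have ha : a ∈ T \ {x} := by rw [hTab]; simp
      have hb : b ∈ T \ {x} := by rw [hTab]; simp
      exact hl a (hsub T hT ha) b (hsub T hT hb)
        (hcol.mem_affineSpan_of_mem_of_ne ha.1 hb.1 hxT hab)
    · refine h.1 T (fun y hy => ?_) hcard hcol
      exact hsub T hT ⟨hy, fun hyx => hxT (hyx ▸ hy)⟩
  · intro T hT hcard hcos
    by_cases hxT : x ∈ T
    · have h2 : (T \ {x}).ncard = 3 := by rw [Set.ncard_sdiff_singleton_of_mem hxT, hcard]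
      obtain ⟨a, b, c, hab, hac, hbc, hTab⟩ := Set.ncard_eq_three.1 h2
      have ha : a ∈ T \ {x} := by rw [hTab]; simp
      have hb : b ∈ T \ {x} := by rw [hTab]; simp
      have hc' : c ∈ T \ {x} := by rw [hTab]; simp
      refine hc a (hsub T hT ha) b (hsub T hT hb) c (hsub T hT hc') ⟨hab, hac, hbc, ?_⟩
      rw [← hTab]
      simpa [Set.insert_eq_of_mem hxT] using hcos
    · refine h.2 T (fun y hy => ?_) hcard hcos
      exact hsub T hT ⟨hy, fun hyx => hxT (hyx ▸ hy)⟩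

/-- The configurations of distinct points in general position are dense among all configurations
indexed by a finite type. -/
lemma exists_genPos_near {ι : Type*} [Fintype ι] (p : ι → Pt) {ε : ℝ} (hε : 0 < ε) :
    ∃ q : ι → Pt, (∀ i, dist (q i) (p i) < ε) ∧ Function.Injective q ∧ GenPos (Set.range q) := by
  classical
  suffices H : ∀ s : Finset ι, ∃ q : ι → Pt, (∀ i, dist (q i) (p i) < ε) ∧
      Set.InjOn q s ∧ GenPos (q '' s) by
    obtain ⟨q, h1, h2, h3⟩ := H Finset.univ
    refine ⟨q, h1, ?_, ?_⟩
    · simpa using h2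
    · simpa using h3
  intro s
  induction s using Finset.induction_on with
  | empty =>
    refine ⟨p, fun i => by simpa using hε, by simp, ?_, ?_⟩ <;>
    · intro T hT hcard
      simp only [Finset.coe_empty, Set.image_empty, Set.subset_empty_iff] at hT
      simp [hT] at hcard
  | insert a s ha ih =>
    obtain ⟨q, h1, h2, h3⟩ := ih
    have hfin : (q '' s).Finite := s.finite_toSet.image q
    obtain ⟨x, hxball, hxbad⟩ : ∃ x ∈ ball (p a) ε, x ∉ badSet (q '' s) := by
      by_contra! hcon
      exact (measure_ball_pos volume (p a) hε).ne' (measure_mono_null hcon (volume_badSet hfin))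
    have heq : Set.EqOn (Function.update q a x) q s := fun i hi =>
      Function.update_of_ne (fun hia => ha (by simpa [hia] using hi)) _ _
    refine ⟨Function.update q a x, fun i => ?_, ?_, ?_⟩
    · by_cases hi : i = a
      · subst hi; simpa using hxball
      · simpa [hi] using h1 i
    · rw [Finset.coe_insert, Set.injOn_insert (by simpa using ha)]
      refine ⟨h2.congr heq.symm, ?_⟩
      rw [heq.image_eq, Function.update_self]
      exact fun hx => hxbad (Or.inl (Or.inl hx))
    · rw [Finset.coe_insert, Set.image_insert_eq, heq.image_eq, Function.update_self]
      exact genPos_insert h3 hxbad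

/-! ### The five clusters -/

/-- The five clusters of the construction. -/
inductive Cluster
  | east | west | centre | north | south

/-- The point with parameter `t` on the line carrying a cluster; `t = 0` gives the position of the
cluster. -/
def pos : Cluster → ℝ → Pt
  | .east, t => !₂[1 + t, 0]
  | .west, t => !₂[-1 + t, 0]
  | .centre, t => !₂[0, t]
  | .north, t => !₂[t, 1]
  | .south, t => !₂[t, -1]

/-- The squared distance from `pos X t` to the point `(a, b)`. -/
def sqd (X : Cluster) (t a b : ℝ) : ℝ :=
  match X with
  | .east => (1 + t - a) ^ 2 + b ^ 2
  | .west => (-1 + t - a) ^ 2 + b ^ 2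
  | .centre => a ^ 2 + (t - b) ^ 2
  | .north => (t - a) ^ 2 + (1 - b) ^ 2
  | .south => (t - a) ^ 2 + (-1 - b) ^ 2

lemma dist_pos_point (X : Cluster) (t a b : ℝ) : dist (pos X t) !₂[a, b] = √(sqd X t a b) := by
  cases X <;> simp [pos, sqd, EuclideanSpace.dist_eq, Real.dist_eq, sq_abs]

/-- The pairs of clusters `(X, Y)` such that a disk tangent to the line of `X` at a point of that
cluster can reach `Y` and avoid the three other clusters. -/
def Serves : Cluster → Cluster → Prop
  | .east, .north | .east, .south | .west, .north | .west, .south => True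
  | .north, .centre | .south, .centre => True
  | .centre, .east | .centre, .west => True
  | _, _ => False

/-- The centre coordinates and the radius of a disk tangent to the line of the first cluster at its
point of parameter `t` and reaching the second cluster; a dummy value unless `Serves` holds. -/
def tangentDisk : Cluster → Cluster → ℝ → ℝ × ℝ × ℝ
  | .east, .north, t => (1 + t, 2, 2)
  | .east, .south, t => (1 + t, -2, 2)
  | .west, .north, t => (-1 + t, 2, 2)
  | .west, .south, t => (-1 + t, -2, 2)
  | .north, .centre, t => (t, 2 / 5, 3 / 5)
  | .south, .centre, t => (t, -(2 / 5), 3 / 5)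
  | .centre, .east, t => (3 / 5, t, 3 / 5)
  | .centre, .west, t => (-(3 / 5), t, 3 / 5)
  | _, _, _ => (0, 0, 1)

lemma tangentDisk_eq {X Y : Cluster} (t : ℝ) (h : Serves X Y) :
    sqd X t (tangentDisk X Y t).1 (tangentDisk X Y t).2.1 = (tangentDisk X Y t).2.2 ^ 2 := by
  cases X <;> cases Y <;> simp only [Serves] at h <;> simp only [tangentDisk, sqd] <;> ring

/-- The squared-distance form of the tangent disk at the point `u = (X, t)`: with squared radius
exceeding that of the tangent circle by half the squared gap `δ` between parameters, it contains `u`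
but no other point of cluster `X`. -/
lemma exists_disk {X Y : Cluster} (h : Serves X Y) {t t' δ : ℝ} (ht : |t| ≤ 1 / 100)
    (ht' : |t'| ≤ 1 / 100) (hδ : 0 < δ) (hδ1 : δ ≤ 1 / 100) :
    ∃ a b ρ : ℝ, 0 < ρ ∧ sqd X t a b < ρ ∧ sqd Y t' a b < ρ ∧
      ∀ Z z, |z| ≤ 1 / 100 → (Z = X → δ ^ 2 ≤ (z - t) ^ 2) → Z ≠ Y → ρ < sqd Z z a b := by
  have hδ2 : δ ^ 2 ≤ 1 / 10000 := by nlinarith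
  have hδ3 : 0 < δ ^ 2 := by positivity
  rw [abs_le] at ht ht'
  obtain ⟨h1, h2⟩ := ht
  obtain ⟨h3, h4⟩ := ht'
  have side : ∀ a b r : ℝ, sqd X t a b = r ^ 2 → 0 < r → sqd Y t' a b ≤ r ^ 2 →
      (∀ Z z, |z| ≤ 1 / 100 → (Z = X → δ ^ 2 ≤ (z - t) ^ 2) → Z ≠ Y →
        r ^ 2 + δ ^ 2 ≤ sqd Z z a b) →
      ∃ a b ρ : ℝ, 0 < ρ ∧ sqd X t a b < ρ ∧ sqd Y t' a b < ρ ∧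
      ∀ Z z, |z| ≤ 1 / 100 → (Z = X → δ ^ 2 ≤ (z - t) ^ 2) → Z ≠ Y → ρ < sqd Z z a b := by
    intro a b r e1 hr e2 e3
    refine ⟨a, b, r ^ 2 + δ ^ 2 / 2, by positivity, by linarith, by linarith, ?_⟩
    intro Z z hz hZX hZY
    have := e3 Z z hz hZX hZY
    linarith
  refine side _ _ _ (tangentDisk_eq t h) ?_ ?_ ?_
  · cases X <;> cases Y <;> simp only [Serves] at h <;> norm_num [tangentDisk]
  · cases X <;> cases Y <;> simp only [Serves] at h <;> simp only [tangentDisk, sqd] <;> nlinarith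
  · intro Z z hz hX hY
    rw [abs_le] at hz
    cases X <;> cases Y <;> simp only [Serves] at h <;> cases Z <;>
      simp only [ne_eq, reduceCtorEq, not_false_eq_true, not_true_eq_false, forall_const,
        IsEmpty.forall_iff] at hX hY <;>
      simp only [tangentDisk, sqd] <;> nlinarith

/-! ### Indexing the points -/

/-- The cluster of the `i`-th point of a colour (`true` is red), when the two rim clusters of that
colour are filled first, with `s` points each. -/
def cl (s : ℕ) : Bool → ℕ → Cluster
  | true, i => if i < s then .north else if i < 2 * s then .south else .centre
  | false, i => if i < s then .east else if i < 2 * s then .west else .centre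

/-- The integer position of the `i`-th point of a colour in its cluster; red points have positive
positions and blue points negative ones. -/
def slot : Bool → ℕ → ℤ
  | true, i => i + 1
  | false, i => -(i + 1)

lemma slot_injective {c c' : Bool} {i i' : ℕ} (h : slot c i = slot c' i') : c = c' ∧ i = i' := by
  cases c <;> cases c' <;> simp [slot] at h ⊢ <;> omega

/-- Each cluster has at most `s` points: at the centre this is `2 (m - 2 s) ≤ s`. -/
lemma card_cluster {m s : ℕ} (h : 2 * m ≤ 5 * s) (X : Cluster) :
    {k : Bool × Fin m | cl s k.1 k.2 = X}.ncard ≤ s := by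
  -- `f` shifts indices so that the cluster embeds into `[0, s)`; at the centre the red points come
  -- first and the `m - 2 s` blue ones follow them.
  let f : Bool × Fin m → ℤ := fun k => match X with
    | .east | .north => k.2
    | .west | .south => k.2 - s
    | .centre => if k.1 then k.2 - 2 * s else (k.2 : ℤ) - 2 * s + (m - 2 * s)
  have hmaps : ∀ k ∈ {k : Bool × Fin m | cl s k.1 k.2 = X}, f k ∈ (Finset.Ico (0 : ℤ) s : Set ℤ) := by
    rintro ⟨c, i, hi⟩ hk
    cases X <;> cases c <;> simp only [cl, Set.mem_ofPred_eq, f] at hk ⊢ <;>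
      split_ifs at hk ⊢ <;> simp_all <;> omega
  have hinj : Set.InjOn f {k : Bool × Fin m | cl s k.1 k.2 = X} := by
    rintro ⟨c, i, hi⟩ hk ⟨c', i', hi'⟩ hk' he
    cases X <;> cases c <;> cases c' <;> simp only [cl, Set.mem_ofPred_eq, f] at hk hk' he ⊢ <;>
      split_ifs at hk hk' he <;> simp_all <;> omega
  have := Set.ncard_le_ncard_of_injOn f hmaps hinj (Finset.finite_toSet _)
  rwa [Set.ncard_coe_finset, Int.card_Ico, sub_zero, Int.toNat_natCast] at this

lemma slot_abs_le {m : ℕ} (c : Bool) (i : Fin m) : |slot c i| ≤ m := by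
  have := i.2
  cases c <;> simp only [slot] <;> rw [abs_le] <;> constructor <;> omega

/-- The unperturbed configuration, with parameters that are multiples of `δ`. -/
def conf (m s : ℕ) (δ : ℝ) (k : Bool × Fin m) : Pt := pos (cl s k.1 k.2) (δ * slot k.1 k.2)

/-- In the unperturbed configuration every red-blue pair `u, v` has a disk containing both in
its interior, and all points of which, up to a single point `w`, belong to one cluster `X`. -/
lemma conf_disk {m s : ℕ} {δ : ℝ} (hδ : 0 < δ) (hδm : δ * m ≤ 1 / 100) (i j : Fin m) :
    ∃ (c : Pt) (r : ℝ) (w : Bool × Fin m) (X : Cluster), 0 < r ∧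
      dist (conf m s δ (true, i)) c < r ∧ dist (conf m s δ (false, j)) c < r ∧
      ∀ k : Bool × Fin m, k = w ∨ cl s k.1 k.2 = X ∨ r < dist (conf m s δ k) c := by
  have habs : ∀ k : Bool × Fin m, |δ * slot k.1 k.2| ≤ 1 / 100 := by
    intro k
    have h1 : |(slot k.1 k.2 : ℝ)| ≤ m := by exact_mod_cast slot_abs_le k.1 k.2
    rw [abs_mul, abs_of_pos hδ]
    exact (mul_le_mul_of_nonneg_left h1 hδ.le).trans hδm
  have hδ1 : δ ≤ 1 / 100 := by
    have : (1 : ℝ) ≤ m := by exact_mod_cast (Nat.one_le_iff_ne_zero.2 (by have := i.2; omega))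
    nlinarith
  have hsep : ∀ k w : Bool × Fin m, k ≠ w → δ ^ 2 ≤ (δ * slot k.1 k.2 - δ * slot w.1 w.2) ^ 2 := by
    intro k w hkw
    have hne : slot k.1 k.2 - slot w.1 w.2 ≠ 0 := fun h => hkw <| by
      obtain ⟨h1, h2⟩ := slot_injective (sub_eq_zero.1 h)
      exact Prod.ext h1 (Fin.ext h2)
    have h1 : (1 : ℝ) ≤ ((slot k.1 k.2 : ℝ) - slot w.1 w.2) ^ 2 := by
      have : 0 < (slot k.1 k.2 - slot w.1 w.2) ^ 2 := by positivity
      exact_mod_cast this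
    rw [← mul_sub, mul_pow]
    nlinarith [sq_nonneg δ]
  have tangent : ∀ u v : Bool × Fin m, Serves (cl s u.1 u.2) (cl s v.1 v.2) →
      ∃ (c : Pt) (r : ℝ) (w : Bool × Fin m) (X : Cluster), 0 < r ∧
      dist (conf m s δ u) c < r ∧ dist (conf m s δ v) c < r ∧
      ∀ k : Bool × Fin m, k = w ∨ cl s k.1 k.2 = X ∨ r < dist (conf m s δ k) c := by
    intro u v huv
    obtain ⟨a, b, ρ, hρ, hu, hv, hk⟩ := exists_disk huv (habs u) (habs v) hδ hδ1
    refine ⟨!₂[a, b], √ρ, u, cl s v.1 v.2, Real.sqrt_pos.2 hρ, ?_, ?_, fun k => ?_⟩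
    · rw [conf, dist_pos_point]; exact (Real.sqrt_lt_sqrt_iff_of_pos hρ).2 hu
    · rw [conf, dist_pos_point]; exact (Real.sqrt_lt_sqrt_iff_of_pos hρ).2 hv
    · by_cases h1 : k = u
      · exact Or.inl h1
      by_cases h2 : cl s k.1 k.2 = cl s v.1 v.2
      · exact Or.inr (Or.inl h2)
      refine Or.inr (Or.inr ?_)
      rw [conf, dist_pos_point]
      exact Real.sqrt_lt_sqrt hρ.le (hk _ _ (habs k) (fun _ => hsep k u h1) h2)
  by_cases hcc : cl s true i = .centre ∧ cl s false j = .centre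
  · have hin : ∀ k : Bool × Fin m, cl s k.1 k.2 = .centre →
        dist (conf m s δ k) !₂[0, 0] < 1 / 2 := by
      intro k hk
      have := abs_le.1 (habs k)
      rw [conf, dist_pos_point, hk, Real.sqrt_lt' (by norm_num)]
      simp only [sqd]
      nlinarith
    refine ⟨!₂[0, 0], 1 / 2, (true, i), .centre, by norm_num, hin _ hcc.1, hin _ hcc.2, fun k => ?_⟩
    have hb := abs_le.1 (habs k)
    by_cases h2 : cl s k.1 k.2 = .centre
    · exact Or.inr (Or.inl h2)
    refine Or.inr (Or.inr ?_)
    rw [conf, dist_pos_point, Real.lt_sqrt (by norm_num)]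
    cases hX : cl s k.1 k.2 <;> simp only [sqd, hX] at h2 ⊢ <;> first | nlinarith | exact absurd trivial h2
  · by_cases h : Serves (cl s true i) (cl s false j)
    · exact tangent (true, i) (false, j) h
    · have h' : Serves (cl s false j) (cl s true i) := by
        clear tangent hsep habs
        simp only [cl] at h hcc ⊢
        split_ifs at h hcc ⊢ <;> simp [Serves] at h hcc ⊢
      obtain ⟨c, r, w, X, hr, h1, h2, h3⟩ := tangent (false, j) (true, i) h'
      exact ⟨c, r, w, X, hr, h2, h1, h3⟩

/-- For every even `n ≥ 6` there exists a set of `n` points in the plane in general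
position, partitioned into `n/2` red points `R` and `n/2` blue points `B`, such that for
every red point `u ∈ R` and every blue point `v ∈ B` there is a closed disk containing
both `u` and `v` that contains at most `⌈n/5⌉ + 1` points of the set. -/
theorem pi_bichrom_upper_bound (n : ℕ) (hn : 6 ≤ n) (heven : Even n) :
    ∃ R B : Set Pt, R.Finite ∧ B.Finite ∧ Disjoint R B ∧
      R.ncard = n / 2 ∧ B.ncard = n / 2 ∧ GenPos (R ∪ B) ∧
      ∀ u ∈ R, ∀ v ∈ B, ∃ (c : Pt) (r : ℝ), 0 < r ∧
        u ∈ closedBall c r ∧ v ∈ closedBall c r ∧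
        (((R ∪ B) ∩ closedBall c r).ncard : ℤ) ≤ ⌈(n : ℝ) / 5⌉ + 1 := by
  obtain ⟨m, hm⟩ := heven
  have hnm : n / 2 = m := by omega
  have hm0 : 0 < m := by omega
  obtain ⟨s, hs1, hs2⟩ : ∃ s : ℕ, 2 * m ≤ 5 * s ∧ 5 * s ≤ n + 4 := ⟨(n + 4) / 5, by omega, by omega⟩
  have hs : (s : ℤ) ≤ ⌈(n : ℝ) / 5⌉ := by
    have h1 : (5 * s : ℝ) ≤ n + 4 := by exact_mod_cast hs2
    have h2 : (s : ℤ) - 1 < ⌈(n : ℝ) / 5⌉ := by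
      rw [Int.lt_ceil]; push_cast; linarith
    omega
  have hmR : (0 : ℝ) < m := by exact_mod_cast hm0
  set δ : ℝ := 1 / 100 / m with hδdef
  have hδ : 0 < δ := by positivity
  have hδm : δ * m ≤ 1 / 100 := by rw [hδdef, div_mul_cancel₀ _ hmR.ne']
  choose c r w X hr hred hblue hout using fun i j => conf_disk (s := s) hδ hδm i j
  have hev : ∀ᶠ q : Bool × Fin m → Pt in 𝓝 (conf m s δ), ∀ i j,
      dist (q (true, i)) (c i j) < r i j ∧ dist (q (false, j)) (c i j) < r i j ∧
      ∀ k, k = w i j ∨ cl s k.1 k.2 = X i j ∨ r i j < dist (q k) (c i j) := by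
    have hcont : ∀ k i j, ContinuousAt (fun q : Bool × Fin m → Pt => dist (q k) (c i j))
        (conf m s δ) := fun k i j =>
      ((continuous_apply k).dist continuous_const).continuousAt
    refine eventually_all.2 fun i => eventually_all.2 fun j => ?_
    refine ((hcont _ i j).eventually_lt_const (hred i j)).and
      (((hcont _ i j).eventually_lt_const (hblue i j)).and (eventually_all.2 fun k => ?_))
    rcases hout i j k with h | h | h
    · exact Eventually.of_forall fun _ => Or.inl h
    · exact Eventually.of_forall fun _ => Or.inr (Or.inl h)
    · exact ((hcont k i j).eventually_const_lt h).mono fun _ hq => Or.inr (Or.inr hq)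
  obtain ⟨ε, hε, hball⟩ := Metric.eventually_nhds_iff.1 hev
  obtain ⟨q, hq, hinj, hgen⟩ := exists_genPos_near (conf m s δ) hε
  have hdisk := hball ((dist_pi_lt_iff hε).2 hq)
  have hcard : ∀ b : Bool, (Set.range fun i : Fin m => q (b, i)).ncard = m := by
    intro b
    have hb : Function.Injective fun i : Fin m => q (b, i) :=
      hinj.comp (Prod.mk_right_injective b)
    rw [← Set.image_univ, Set.ncard_image_of_injective _ hb,
      Set.ncard_univ, Nat.card_eq_fintype_card, Fintype.card_fin]
  have hunion : (Set.range fun i : Fin m => q (true, i)) ∪ (Set.range fun i : Fin m => q (false, i))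
      = Set.range q := by
    ext x; simp [or_comm]
  refine ⟨Set.range fun i => q (true, i), Set.range fun i => q (false, i), Set.finite_range _,
    Set.finite_range _, ?_, by rw [hcard, hnm], by rw [hcard, hnm], hunion ▸ hgen, ?_⟩
  · rw [Set.disjoint_left]
    rintro _ ⟨i, rfl⟩ ⟨j, hj⟩
    simpa using hinj hj
  · rintro _ ⟨i, rfl⟩ _ ⟨j, rfl⟩
    obtain ⟨h1, h2, h3⟩ := hdisk i j
    refine ⟨c i j, r i j, hr i j, mem_closedBall.2 h1.le, mem_closedBall.2 h2.le, ?_⟩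
    rw [hunion]
    have hsub : Set.range q ∩ closedBall (c i j) (r i j) ⊆
        q '' insert (w i j) {k | cl s k.1 k.2 = X i j} := by
      rintro _ ⟨⟨k, rfl⟩, hk⟩
      refine Set.mem_image_of_mem q ?_
      rcases h3 k with h | h | h
      · exact Or.inl h
      · exact Or.inr h
      · exact absurd (mem_closedBall.1 hk) (not_le.2 h)
    have hle : (Set.range q ∩ closedBall (c i j) (r i j)).ncard ≤ s + 1 :=
      calc _ ≤ (q '' insert (w i j) {k | cl s k.1 k.2 = X i j}).ncard :=
            Set.ncard_le_ncard hsub (Set.toFinite _)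
        _ ≤ (insert (w i j) {k | cl s k.1 k.2 = X i j}).ncard := Set.ncard_image_le (Set.toFinite _)
        _ ≤ {k : Bool × Fin m | cl s k.1 k.2 = X i j}.ncard + 1 := Set.ncard_insert_le _ _
        _ ≤ s + 1 := by gcongr; exact card_cluster hs1 _
    have : ((Set.range q ∩ closedBall (c i j) (r i j)).ncard : ℤ) ≤ s + 1 := by exact_mod_cast hle
    omega
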